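/- Let c₁, c₂, c₃ ∈ 𝔽_p and N(c₁,c₂,c₃) = #{(a,b) ∈ 𝔽_q × 𝔽_q : Tr(a²) = c₁, Tr(b²) = c₂ and Tr(ab) = c₃}. If m is even, then (as complex numbers): N = p^{2m−3} + p^{m−3}(p−1)(2p−1) + p^{m−3}(p²−1)G + p^{−3}(p−1)³G² if c₁ = c₂ = c₃ = 0; N = p^{2m−3} + p^{m−3}(p−1)G − p^{m−3}(2p−1) + p^{−3}(p−1)G² if c₁ = c₂ = 0 and c₃ ≠ 0; N = p^{2m−3} − p^{m−3}(p−1) − p^{m−3}G + p^{−3}(p−1)G² + p^{−2}η̄(−c₁c₂)(p^m − G)G if c₁ ≠ 0, c₂ ≠ 0 and c₃ = 0; N = p^{2m−3} + p^{m−3}(p−1)² − p^{m−3}G − p^{−3}(p−1)²G² if c₃ = 0 and exactly one of c₁, c₂ is zero; N = p^{2m−3} + p^{m−3}(p−1)(G−1) − p^{−3}G² if c₃ ≠ 0 and exactly one of c₁, c₂ is zero; N = p^{2m−3} − p^{m−3}(G−1) − p^{−3}G² if all c_i ≠ 0 and c₃² − c₁c₂ = 0; N = p^{2m−3} − p^{m−3}(2G−1)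 + p^{−3}(p+1)(p^m − G)G if all c_i ≠ 0 and η̄(c₃² − c₁c₂) = 1; and N = p^{2m−3} − p^{m−3}(2G−1) − p^{−3}(p−1)(p^m − G)G if all c_i ≠ 0 and η̄(c₃² − c₁c₂) = −1. -/

import Mathlib

open Finset
open scoped Classical

noncomputable section

/-- `ζ_p = exp(2πi/p)`. -/
def zeta (p : ℕ) : ℂ := Complex.exp (2 * Real.pi * Complex.I / p)

/-- The canonical additive character of `ℤ/p`: `χ̄₁(c) = ζ_p^c`. -/
def chiBar (p : ℕ) (c : ZMod p) : ℂ := zeta p ^ c.val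

/-- The quadratic character of `(ℤ/p)^*`, extended by `η̄(0) = 0`. -/
def etaBar (p : ℕ) (c : ZMod p) : ℂ :=
  if c = 0 then 0 else if IsSquare c then 1 else -1

/-- The quadratic character of `F^*`, extended by `η(0) = 0`. -/
def etaQ (F : Type) [Field F] (x : F) : ℂ :=
  if x = 0 then 0 else if IsSquare x then 1 else -1

/-- The absolute trace map from `F` to `ℤ/p`. -/
def Trq (p : ℕ) (F : Type) [Field F] [Algebra (ZMod p) F] (x : F) : ZMod p :=
  Algebra.trace (ZMod p) F x

/-- The canonical additive character of `F`: `χ₁(x) = ζ_p^{Tr x}`. -/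
def chiQ (p : ℕ) (F : Type) [Field F] [Algebra (ZMod p) F] (x : F) : ℂ :=
  chiBar p (Trq p F x)

/-- The quadratic Gauss sum `G` over `F`. -/
def GaussQ (p : ℕ) (F : Type) [Field F] [Fintype F] [Algebra (ZMod p) F] : ℂ :=
  ∑ x ∈ univ.filter (fun x : F => x ≠ 0), etaQ F x * chiQ p F x

/-- The quadratic Gauss sum `Ḡ` over `ℤ/p`. -/
def GaussP (p : ℕ) [NeZero p] : ℂ :=
  ∑ y ∈ univ.filter (fun y : ZMod p => y ≠ 0), etaBar p y * chiBar p y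


lemma etaQ_eq {K : Type} [Field K] [Fintype K] (x : K) :
    etaQ K x = ((quadraticChar K x : ℤ) : ℂ) := by
  unfold etaQ
  rw [quadraticChar_apply, quadraticCharFun]
  split_ifs <;> simp

lemma etaBar_eq (p : ℕ) [Fact (Nat.Prime p)] (c : ZMod p) :
    etaBar p c = etaQ (ZMod p) c := by
  unfold etaBar etaQ
  congr

/-- Counting square roots. -/
lemma count_sqrt {K : Type} [Field K] [Fintype K] (hK : ringChar K ≠ 2) (y : K) :
    ∑ a : K, (if a ^ 2 = y then (1 : ℂ) else 0) = 1 + etaQ K y := by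
  have h := quadraticChar_card_sqrts hK y
  rw [etaQ_eq, Finset.sum_boole, add_comm (1 : ℂ)]
  have h2 : ((#{x : K | x ^ 2 = y}.toFinset : ℤ) : ℂ) = ((quadraticChar K y + 1 : ℤ) : ℂ) := by
    rw [h]
  push_cast at h2
  rw [← h2]
  congr 2
  ext x; simp

lemma sum_sq {K : Type} [Field K] [Fintype K] (hK : ringChar K ≠ 2) (f : K → ℂ) :
    ∑ a : K, f (a ^ 2) = ∑ x : K, (1 + etaQ K x) * f x := by
  calc ∑ a : K, f (a ^ 2) = ∑ a : K, ∑ x : K, (if a ^ 2 = x then (1 : ℂ) else 0) * f x := by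
        refine Finset.sum_congr rfl fun a _ => ?_
        simp
    _ = _ := by
        rw [Finset.sum_comm]
        refine Finset.sum_congr rfl fun x _ => ?_
        rw [← Finset.sum_mul, count_sqrt hK]

lemma chiBar_eq (p : ℕ) [Fact (Nat.Prime p)] (c : ZMod p) :
    chiBar p c = ZMod.stdAddChar c := by
  rw [ZMod.stdAddChar_apply, ZMod.toCircle_apply, chiBar, zeta, ← Complex.exp_nat_mul]
  congr 1
  ring

/-- The canonical additive character as an `AddChar`. -/
def psiF (p : ℕ) [Fact (Nat.Prime p)] (F : Type) [Field F] [Algebra (ZMod p) F] : AddChar F ℂ :=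
  (ZMod.stdAddChar (N := p)).compAddMonoidHom (Algebra.trace (ZMod p) F).toAddMonoidHom

lemma psiF_apply (p : ℕ) [Fact (Nat.Prime p)] (F : Type) [Field F] [Algebra (ZMod p) F] (x : F) :
    psiF p F x = ZMod.stdAddChar (Trq p F x) := rfl

lemma psiF_prim (p : ℕ) [Fact (Nat.Prime p)] (F : Type) [Field F] [Fintype F]
    [Algebra (ZMod p) F] : (psiF p F).IsPrimitive := by
  apply AddChar.IsPrimitive.of_ne_one
  obtain ⟨a, ha⟩ : ∃ a : F, Algebra.trace (ZMod p) F a ≠ 0 := by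
    by_contra! h
    have := Algebra.trace_ne_zero (ZMod p) F
    exact this (LinearMap.ext h)
  rw [AddChar.ne_one_iff]
  refine ⟨a, fun hf => ha ?_⟩
  rw [psiF_apply] at hf
  exact (AddChar.IsPrimitive.zmod_char_eq_one_iff p (ZMod.isPrimitive_stdAddChar p) _).mp hf

lemma ringChar_zmod_alg (p : ℕ) [Fact (Nat.Prime p)] (F : Type) [Field F]
    [Algebra (ZMod p) F] : ringChar F = p := by
  have : CharP F p := charP_of_injective_algebraMap (algebraMap (ZMod p) F).injective p
  exact (ringChar.eq F p)

lemma ringChar_ne_two' (p : ℕ) [Fact (Nat.Prime p)] (hp : Odd p) (F : Type) [Field F]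
    [Algebra (ZMod p) F] : ringChar F ≠ 2 := by
  rw [ringChar_zmod_alg p F]; rintro rfl; revert hp; decide

section main
variable (p m : ℕ) [Fact (Nat.Prime p)]
    (F : Type) [Field F] [Fintype F] [Algebra (ZMod p) F]

lemma GaussQ_eq_sum : GaussQ p F = ∑ x : F, etaQ F x * psiF p F x := by
  unfold GaussQ
  rw [Finset.sum_filter]
  refine Finset.sum_congr rfl fun x _ => ?_
  split_ifs with h
  · rw [chiQ, chiBar_eq, psiF_apply]
  · simp at h; simp [h, etaQ]

lemma psi_sum_mul (b : F) : ∑ x : F, psiF p F (x * b) = if b = 0 then (Fintype.card F : ℂ) else 0 := by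
  rw [AddChar.sum_mulShift b (psiF_prim p F)]
  split_ifs <;> simp

lemma e_sum_mul (b : ZMod p) :
    ∑ x : ZMod p, (ZMod.stdAddChar (x * b) : ℂ) = if b = 0 then (p : ℂ) else 0 := by
  rw [AddChar.sum_mulShift b (ZMod.isPrimitive_stdAddChar p), ZMod.card]
  split_ifs <;> simp

lemma sum_psi_sq (hp : Odd p) : ∑ a : F, psiF p F (a ^ 2) = GaussQ p F := by
  rw [sum_sq (ringChar_ne_two' p hp F) (fun x => psiF p F x), GaussQ_eq_sum]
  simp_rw [add_mul, one_mul]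
  rw [Finset.sum_add_distrib]
  have := psi_sum_mul p F 1
  simp at this
  rw [this, zero_add]

lemma isSquare_base (hp : Odd p) (hq : Fintype.card F = p ^ m) (hme : Even m) (c : ZMod p) :
    IsSquare (algebraMap (ZMod p) F c) := by
  by_cases hc : c = 0
  · simp [hc]
  obtain ⟨k, rfl⟩ := hme
  rw [FiniteField.isSquare_iff (ringChar_ne_two' p hp F) (by simpa using hc), ← map_pow, hq]
  have h1 : p - 1 ∣ p ^ k - 1 := by simpa using Nat.sub_dvd_pow_sub_pow p 1 k
  obtain ⟨r, hr⟩ := (hp.pow (n := k))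
  obtain ⟨s, hs⟩ := h1
  have h3 : p ^ (k + k) / 2 = (p - 1) * (s * (r + 1)) := by
    have : p ^ (k + k) = 2 * ((2 * r) * (r + 1)) + 1 := by rw [pow_add, hr]; ring
    have h5 : (p - 1) * s = 2 * r := by omega
    rw [this, ← mul_assoc (p - 1), h5]
    omega
  rw [h3, pow_mul, ZMod.pow_card_sub_one_eq_one hc, one_pow, map_one]

lemma GaussQ_sq (hp : Odd p) (hq : Fintype.card F = p ^ m) (hme : Even m) :
    GaussQ p F ^ 2 = (p : ℂ) ^ m := by
  have hF := ringChar_ne_two' p hp F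
  have h1 : (quadraticChar F).ringHomComp (Int.castRingHom ℂ) ≠ 1 :=
    (MulChar.ringHomComp_ne_one_iff (RingHom.injective_int _)).mpr (quadraticChar_ne_one hF)
  have h2 : ((quadraticChar F).ringHomComp (Int.castRingHom ℂ)).IsQuadratic :=
    (quadraticChar_isQuadratic F).comp _
  have h := gaussSum_sq h1 h2 (psiF_prim p F)
  have h3 : gaussSum ((quadraticChar F).ringHomComp (Int.castRingHom ℂ)) (psiF p F)
      = GaussQ p F := by
    rw [GaussQ_eq_sum, gaussSum]
    refine Finset.sum_congr rfl fun x _ => ?_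
    rw [etaQ_eq]; rfl
  rw [h3] at h
  rw [h, hq]
  have h4 : quadraticChar F (-1) = 1 := by
    rw [quadraticChar_one_iff_isSquare (by simp)]
    simpa using isSquare_base p m F hp hq hme (-1)
  simp [h4]

lemma sum_psi_csq (hp : Odd p) (hq : Fintype.card F = p ^ m) (hme : Even m) (c : ZMod p) :
    ∑ a : F, psiF p F (algebraMap (ZMod p) F c * a ^ 2) =
      if c = 0 then (p : ℂ) ^ m else GaussQ p F := by
  split_ifs with hc
  · simp [hc, hq]
  · obtain ⟨r, hr⟩ := isSquare_base p m F hp hq hme c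
    have hr0 : r ≠ 0 := by
      rintro rfl
      simp at hr
      exact hc hr
    rw [← sum_psi_sq p F hp]
    refine Fintype.sum_equiv (Equiv.mulLeft₀ r hr0) _ _ fun a => ?_
    simp [hr]; ring_nf

/-- The double sum attached to a binary quadratic form over the prime field. -/
lemma T_eq (hp : Odd p) (hq : Fintype.card F = p ^ m) (hme : Even m) (x y z : ZMod p) :
    ∑ a : F, ∑ b : F, psiF p F (algebraMap (ZMod p) F x * a ^ 2 + algebraMap (ZMod p) F y * b ^ 2
        + algebraMap (ZMod p) F z * (a * b)) =
      (p : ℂ) ^ m + ((p : ℂ) ^ m * GaussQ p F - (p : ℂ) ^ m) * (if z ^ 2 = 4 * x * y then 1 else 0)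
      + ((p : ℂ) ^ m * (p : ℂ) ^ m - (p : ℂ) ^ m * GaussQ p F) *
        (if x = 0 then if y = 0 then if z = 0 then 1 else 0 else 0 else 0) := by
  have hG := GaussQ_sq p m F hp hq hme
  have h2 : (2 : ZMod p) ≠ 0 := by
    have := Ring.two_ne_zero (R := ZMod p) (ringChar_ne_two' p hp (ZMod p))
    exact this
  by_cases hx : x = 0
  · subst hx
    by_cases hz : z = 0
    · subst hz
      simp only [map_zero, zero_mul, zero_add, add_zero, sum_psi_csq p m F hp hq hme y]
      simp [hq]
      split_ifs <;> ring
    · rw [Finset.sum_comm]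
      have : ∀ b : F, ∑ a : F, psiF p F (algebraMap (ZMod p) F 0 * a ^ 2 +
          algebraMap (ZMod p) F y * b ^ 2 + algebraMap (ZMod p) F z * (a * b)) =
          if b = 0 then (p : ℂ) ^ m else 0 := by
        intro b
        have e : ∀ a : F, psiF p F (algebraMap (ZMod p) F 0 * a ^ 2 +
          algebraMap (ZMod p) F y * b ^ 2 + algebraMap (ZMod p) F z * (a * b)) =
          psiF p F (algebraMap (ZMod p) F y * b ^ 2) *
            psiF p F (a * (algebraMap (ZMod p) F z * b)) := by
          intro a
          rw [← AddChar.map_add_eq_mul]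
          congr 1
          simp; ring
        simp_rw [e]
        rw [← Finset.mul_sum, psi_sum_mul]
        by_cases hb : b = 0
        · simp [hb, hq]
        · simp [hb, hz]
      simp_rw [this]
      simp [hz]
  · have hxF : algebraMap (ZMod p) F x ≠ 0 := by simpa using hx
    have h2F : (2 : F) ≠ 0 := by
      have := (map_ne_zero (algebraMap (ZMod p) F)).mpr h2
      rwa [map_ofNat] at this
    rw [Finset.sum_comm]
    have e : ∀ b : F, ∑ a : F, psiF p F (algebraMap (ZMod p) F x * a ^ 2 +
          algebraMap (ZMod p) F y * b ^ 2 + algebraMap (ZMod p) F z * (a * b)) =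
        GaussQ p F * psiF p F (algebraMap (ZMod p) F (y - z ^ 2 / (4 * x)) * b ^ 2) := by
      intro b
      have h := sum_psi_csq p m F hp hq hme x
      rw [if_neg hx] at h
      rw [← h, Finset.sum_mul]
      refine Fintype.sum_equiv
        (Equiv.addRight (algebraMap (ZMod p) F z * b / (2 * algebraMap (ZMod p) F x))) _ _
        fun a => ?_
      rw [← AddChar.map_add_eq_mul]
      congr 1
      have h4F : (4 : F) ≠ 0 := by
        have : (4 : F) = 2 * 2 := by norm_num
        rw [this]; exact mul_ne_zero h2F h2F
      simp only [Equiv.coe_addRight, map_sub, map_div₀, map_pow, map_mul, map_ofNat]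
      field_simp
      ring
    simp_rw [e]
    rw [← Finset.mul_sum, sum_psi_csq p m F hp hq hme]
    have h4 : (4 : ZMod p) ≠ 0 := by
      have : (4 : ZMod p) = 2 * 2 := by norm_num
      rw [this]; exact mul_ne_zero h2 h2
    have hiff : y - z ^ 2 / (4 * x) = 0 ↔ z ^ 2 = 4 * x * y := by
      rw [sub_eq_zero, eq_div_iff (mul_ne_zero h4 hx)]
      constructor <;> intro h <;> linear_combination -h
    by_cases hD : z ^ 2 = 4 * x * y
    · rw [if_pos (hiff.mpr hD), if_pos hD, if_neg hx]; ring
    · rw [if_neg (fun h => hD (hiff.mp h)), if_neg hD, if_neg hx]; linear_combination hG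

end main

section cone
variable (p : ℕ) [Fact (Nat.Prime p)]

lemma count_roots (hp : Odd p) (d₁ d₂ d₃ : ZMod p) :
    ∑ t : ZMod p, (if d₁ + 2 * d₃ * t + d₂ * t ^ 2 = 0 then (1 : ℂ) else 0) =
      if d₂ = 0 then if d₃ = 0 then if d₁ = 0 then (p : ℂ) else 0 else 1
      else 1 + etaBar p (d₃ ^ 2 - d₁ * d₂) := by
  have hK := ringChar_ne_two' p hp (ZMod p)
  have h2 : (2 : ZMod p) ≠ 0 := Ring.two_ne_zero hK
  by_cases h₂ : d₂ = 0
  · subst h₂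
    by_cases h₃ : d₃ = 0
    · subst h₃
      by_cases h₁ : d₁ = 0 <;> simp [h₁, ZMod.card]
    · have : ∀ t : ZMod p, d₁ + 2 * d₃ * t + 0 * t ^ 2 = 0 ↔ t = -d₁ / (2 * d₃) := by
        intro t
        rw [eq_div_iff (mul_ne_zero h2 h₃)]
        constructor <;> intro h <;> linear_combination h
      simp only [this, h₃, if_true, if_false]
      simp
  · rw [if_neg h₂, etaBar_eq, ← count_sqrt hK]
    refine Fintype.sum_equiv ((Equiv.mulLeft₀ d₂ h₂).trans (Equiv.addRight d₃)) _ _ fun t => ?_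
    have : d₁ + 2 * d₃ * t + d₂ * t ^ 2 = 0 ↔
        (d₂ * t + d₃) ^ 2 = d₃ ^ 2 - d₁ * d₂ := by
      constructor
      · intro h; linear_combination d₂ * h
      · intro h
        apply mul_left_cancel₀ h₂
        linear_combination h
    simp [this]

lemma cone_fiber (hp : Odd p) (d₁ d₂ d₃ x : ZMod p) :
    ∑ y : ZMod p, ∑ z : ZMod p, (ZMod.stdAddChar (x * d₁ + y * d₂ + z * d₃) : ℂ) *
      (if z ^ 2 = 4 * x * y then 1 else 0) =
    (if x = 0 then (if d₂ = 0 then (p : ℂ) else 0) - p else 0) +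
      ∑ t : ZMod p, (ZMod.stdAddChar (x * (d₁ + 2 * d₃ * t + d₂ * t ^ 2)) : ℂ) := by
  have hK := ringChar_ne_two' p hp (ZMod p)
  have h2 : (2 : ZMod p) ≠ 0 := Ring.two_ne_zero hK
  have h4 : (4 : ZMod p) ≠ 0 := by
    have : (4 : ZMod p) = 2 * 2 := by norm_num
    rw [this]; exact mul_ne_zero h2 h2
  by_cases hx : x = 0
  · subst hx
    have := e_sum_mul p d₂
    simp [this, ZMod.card]
  · rw [Finset.sum_comm, if_neg hx, zero_add]
    symm
    refine Fintype.sum_equiv (Equiv.mulLeft₀ (2 * x) (mul_ne_zero h2 hx)) _ _ fun t => ?_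
    have : ∀ y : ZMod p, ((2 * x) * t) ^ 2 = 4 * x * y ↔ x * t ^ 2 = y := by
      intro y
      constructor
      · intro h
        apply mul_left_cancel₀ (mul_ne_zero h4 hx)
        linear_combination h
      · rintro rfl; ring
    rw [Equiv.mulLeft₀_apply]
    simp only [this, mul_ite, mul_one, mul_zero, Finset.sum_ite_eq, Finset.mem_univ, if_true]
    congr 1
    ring

lemma cone_sum (hp : Odd p) (d₁ d₂ d₃ : ZMod p) :
    ∑ x : ZMod p, ∑ y : ZMod p, ∑ z : ZMod p,
      (ZMod.stdAddChar (x * d₁ + y * d₂ + z * d₃) : ℂ) *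
      (if z ^ 2 = 4 * x * y then 1 else 0) =
    if d₁ = 0 ∧ d₂ = 0 ∧ d₃ = 0 then (p : ℂ) ^ 2 else p * etaBar p (d₃ ^ 2 - d₁ * d₂) := by
  simp_rw [cone_fiber p hp]
  rw [Finset.sum_add_distrib, Finset.sum_comm (γ := ZMod p) (s := univ) (t := univ)]
  simp_rw [e_sum_mul p]
  have h : ∑ t : ZMod p, (if d₁ + 2 * d₃ * t + d₂ * t ^ 2 = 0 then (p : ℂ) else 0) =
      p * ∑ t : ZMod p, (if d₁ + 2 * d₃ * t + d₂ * t ^ 2 = 0 then (1 : ℂ) else 0) := by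
    rw [Finset.mul_sum]; simp
  rw [h, count_roots p hp]
  simp only [Finset.sum_ite_eq', Finset.mem_univ, if_true]
  by_cases h₂ : d₂ = 0
  · by_cases h₃ : d₃ = 0
    · by_cases h₁ : d₁ = 0
      · simp [h₁, h₂, h₃]; ring
      · simp [h₁, h₂, h₃, etaBar]
    · have : IsSquare (d₃ ^ 2) := IsSquare.sq d₃
      simp [h₂, h₃, etaBar, this]
  · simp [h₂]; ring

end cone

lemma indicator_eq (p : ℕ) [Fact (Nat.Prime p)] (t c : ZMod p) :
    (p : ℂ) * (if t = c then 1 else 0) = ∑ x : ZMod p, (ZMod.stdAddChar (x * (t - c)) : ℂ) := by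
  rw [e_sum_mul]
  simp [sub_eq_zero]

lemma Trq_form (p : ℕ) [Fact (Nat.Prime p)] (F : Type) [Field F] [Fintype F]
    [Algebra (ZMod p) F] (x y z : ZMod p) (u v w : F) :
    Trq p F (algebraMap (ZMod p) F x * u + algebraMap (ZMod p) F y * v
      + algebraMap (ZMod p) F z * w) = x * Trq p F u + y * Trq p F v + z * Trq p F w := by
  simp only [Trq, map_add, ← Algebra.smul_def, map_smul, smul_eq_mul]

lemma N_formula (p m : ℕ) [Fact (Nat.Prime p)] (hp : Odd p)
    (F : Type) [Field F] [Fintype F] [Algebra (ZMod p) F]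
    (hq : Fintype.card F = p ^ m) (hme : Even m) (c₁ c₂ c₃ : ZMod p) :
    (p : ℂ) ^ 3 * (((univ.filter (fun ab : F × F =>
      Trq p F (ab.1 ^ 2) = c₁ ∧ Trq p F (ab.2 ^ 2) = c₂ ∧
        Trq p F (ab.1 * ab.2) = c₃)).card : ℕ) : ℂ) =
    (p : ℂ) ^ m * (if c₁ = 0 ∧ c₂ = 0 ∧ c₃ = 0 then (p : ℂ) ^ 3 else 0) +
    ((p : ℂ) ^ m * GaussQ p F - (p : ℂ) ^ m) *
      (if c₁ = 0 ∧ c₂ = 0 ∧ c₃ = 0 then (p : ℂ) ^ 2 else p * etaBar p (c₃ ^ 2 - c₁ * c₂)) +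
    ((p : ℂ) ^ m * (p : ℂ) ^ m - (p : ℂ) ^ m * GaussQ p F) := by
  have h1 : (((univ.filter (fun ab : F × F =>
      Trq p F (ab.1 ^ 2) = c₁ ∧ Trq p F (ab.2 ^ 2) = c₂ ∧
        Trq p F (ab.1 * ab.2) = c₃)).card : ℕ) : ℂ) = ∑ a : F, ∑ b : F,
        (if Trq p F (a ^ 2) = c₁ then (1 : ℂ) else 0) * (if Trq p F (b ^ 2) = c₂ then 1 else 0) *
        (if Trq p F (a * b) = c₃ then 1 else 0) := by
    rw [← Finset.sum_boole, Fintype.sum_prod_type]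
    refine Finset.sum_congr rfl fun a _ => Finset.sum_congr rfl fun b _ => ?_
    by_cases h1 : Trq p F (a ^ 2) = c₁ <;> by_cases h2 : Trq p F (b ^ 2) = c₂ <;>
      by_cases h3 : Trq p F (a * b) = c₃ <;> simp [h1, h2, h3]
  have h2 : (p : ℂ) ^ 3 * ∑ a : F, ∑ b : F,
        (if Trq p F (a ^ 2) = c₁ then (1 : ℂ) else 0) * (if Trq p F (b ^ 2) = c₂ then 1 else 0) *
        (if Trq p F (a * b) = c₃ then 1 else 0) =
      ∑ a : F, ∑ b : F, ∑ x : ZMod p, ∑ y : ZMod p, ∑ z : ZMod p,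
        (ZMod.stdAddChar (x * -c₁ + y * -c₂ + z * -c₃) : ℂ) *
        psiF p F (algebraMap (ZMod p) F x * a ^ 2 + algebraMap (ZMod p) F y * b ^ 2
        + algebraMap (ZMod p) F z * (a * b)) := by
    rw [Finset.mul_sum]
    refine Finset.sum_congr rfl fun a _ => ?_
    rw [Finset.mul_sum]
    refine Finset.sum_congr rfl fun b _ => ?_
    have : ∀ A B C : ℂ, (p : ℂ) ^ 3 * (A * B * C) = (p * A) * ((p * B) * (p * C)) := by
      intros; ring
    rw [this, indicator_eq, indicator_eq, indicator_eq, Finset.sum_mul]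
    refine Finset.sum_congr rfl fun x _ => ?_
    rw [Finset.sum_mul, Finset.mul_sum]
    refine Finset.sum_congr rfl fun y _ => ?_
    rw [Finset.mul_sum, Finset.mul_sum]
    refine Finset.sum_congr rfl fun z _ => ?_
    rw [psiF_apply, Trq_form, ← AddChar.map_add_eq_mul, ← AddChar.map_add_eq_mul,
      ← AddChar.map_add_eq_mul]
    congr 1
    ring
  have h3 : ∑ a : F, ∑ b : F, ∑ x : ZMod p, ∑ y : ZMod p, ∑ z : ZMod p,
        (ZMod.stdAddChar (x * -c₁ + y * -c₂ + z * -c₃) : ℂ) *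
        psiF p F (algebraMap (ZMod p) F x * a ^ 2 + algebraMap (ZMod p) F y * b ^ 2
        + algebraMap (ZMod p) F z * (a * b)) =
      ∑ x : ZMod p, ∑ y : ZMod p, ∑ z : ZMod p,
        (ZMod.stdAddChar (x * -c₁ + y * -c₂ + z * -c₃) : ℂ) * ∑ a : F, ∑ b : F,
        psiF p F (algebraMap (ZMod p) F x * a ^ 2 + algebraMap (ZMod p) F y * b ^ 2
        + algebraMap (ZMod p) F z * (a * b)) := by
    have key : ∀ f : F → F → ZMod p → ZMod p → ZMod p → ℂ,
        ∑ a : F, ∑ b : F, ∑ x : ZMod p, ∑ y : ZMod p, ∑ z : ZMod p, f a b x y z =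
        ∑ x : ZMod p, ∑ y : ZMod p, ∑ z : ZMod p, ∑ a : F, ∑ b : F, f a b x y z := by
      intro f
      have e1 : ∑ a : F, ∑ b : F, ∑ x : ZMod p, ∑ y : ZMod p, ∑ z : ZMod p, f a b x y z =
        ∑ ab : F × F, ∑ w : ZMod p × ZMod p × ZMod p, f ab.1 ab.2 w.1 w.2.1 w.2.2 := by
        simp only [Fintype.sum_prod_type]
      rw [e1, Finset.sum_comm]
      simp only [Fintype.sum_prod_type]
    rw [key]
    simp only [Finset.mul_sum]
  rw [h1, h2, h3]
  simp_rw [T_eq p m F hp hq hme]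
  have hsplit : ∀ x y z : ZMod p, ∀ P Q R : ℂ,
      (ZMod.stdAddChar (x * -c₁ + y * -c₂ + z * -c₃) : ℂ) *
      (P + Q * (if z ^ 2 = 4 * x * y then 1 else 0)
       + R * (if x = 0 then if y = 0 then if z = 0 then 1 else 0 else 0 else 0)) =
      P * (ZMod.stdAddChar (x * -c₁) * (ZMod.stdAddChar (y * -c₂) * ZMod.stdAddChar (z * -c₃))) +
      Q * (ZMod.stdAddChar (x * -c₁ + y * -c₂ + z * -c₃) *
        (if z ^ 2 = 4 * x * y then 1 else 0)) +
      R * (if x = 0 then if y = 0 then if z = 0 then 1 else 0 else 0 else 0) := by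
    intro x y z P Q R
    by_cases h : x = 0 ∧ y = 0 ∧ z = 0
    · obtain ⟨rfl, rfl, rfl⟩ := h
      simp
    · have h0 : (if x = 0 then if y = 0 then if z = 0 then (1 : ℂ) else 0 else 0 else 0) = 0 := by
        split_ifs <;> first | rfl | (exfalso; tauto)
      rw [h0, ← AddChar.map_add_eq_mul, ← AddChar.map_add_eq_mul, ← add_assoc]
      ring
  simp_rw [hsplit]
  simp only [Finset.sum_add_distrib, ← Finset.mul_sum]
  rw [cone_sum p hp]
  have h5 : (∑ x : ZMod p, ∑ y : ZMod p, ∑ z : ZMod p,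
      (if x = 0 then if y = 0 then if z = 0 then (1 : ℂ) else 0 else 0 else 0)) = 1 := by
    rw [Fintype.sum_eq_single 0 (by intro x hx; simp [hx]),
      Fintype.sum_eq_single 0 (by intro x hx; simp [hx]),
      Fintype.sum_eq_single 0 (by intro x hx; simp [hx])]
    simp
  rw [h5]
  simp only [← Finset.sum_mul, ← Finset.mul_sum, e_sum_mul, neg_eq_zero]
  have h6 : (-c₃) ^ 2 - (-c₁) * (-c₂) = c₃ ^ 2 - c₁ * c₂ := by ring
  rw [h6]
  by_cases k1 : c₁ = 0 <;> by_cases k2 : c₂ = 0 <;> by_cases k3 : c₃ = 0 <;>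
    simp [k1, k2, k3] <;> first | ring1 | (left; ring1)

theorem N3_card_m_even (p m : ℕ) [Fact (Nat.Prime p)] (hp : Odd p)
    (F : Type) [Field F] [Fintype F] [Algebra (ZMod p) F]
    (hm : 0 < m) (hq : Fintype.card F = p ^ m)
    (hmeven : Even m) (c₁ c₂ c₃ : ZMod p) :
    (c₁ = 0 ∧ c₂ = 0 ∧ c₃ = 0 →
      (((univ.filter (fun ab : F × F =>
      Trq p F (ab.1 ^ 2) = c₁ ∧ Trq p F (ab.2 ^ 2) = c₂ ∧
        Trq p F (ab.1 * ab.2) = c₃)).card : ℕ) : ℂ) = (p : ℂ) ^ (2 * (m : ℤ) - 3 : ℤ) + (p : ℂ) ^ ((m : ℤ) - 3 : ℤ) * ((p : ℂ) - 1) * (2 * (p : ℂ) - 1) + (p : ℂ) ^ ((m : ℤ) - 3 : ℤ) * ((p : ℂ) ^ 2 - 1) * GaussQ p F + (p : ℂ) ^ (-3 : ℤ) * ((p : ℂ) - 1) ^ 3 * (GaussQ p F) ^ 2) ∧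
    (c₁ = 0 ∧ c₂ = 0 ∧ c₃ ≠ 0 →
      (((univ.filter (fun ab : F × F =>
      Trq p F (ab.1 ^ 2) = c₁ ∧ Trq p F (ab.2 ^ 2) = c₂ ∧
        Trq p F (ab.1 * ab.2) = c₃)).card : ℕ) : ℂ) = (p : ℂ) ^ (2 * (m : ℤ) - 3 : ℤ) + (p : ℂ) ^ ((m : ℤ) - 3 : ℤ) * ((p : ℂ) - 1) * GaussQ p F - (p : ℂ) ^ ((m : ℤ) - 3 : ℤ) * (2 * (p : ℂ) - 1) + (p : ℂ) ^ (-3 : ℤ) * ((p : ℂ) - 1) * (GaussQ p F) ^ 2) ∧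
    (c₁ ≠ 0 ∧ c₂ ≠ 0 ∧ c₃ = 0 →
      (((univ.filter (fun ab : F × F =>
      Trq p F (ab.1 ^ 2) = c₁ ∧ Trq p F (ab.2 ^ 2) = c₂ ∧
        Trq p F (ab.1 * ab.2) = c₃)).card : ℕ) : ℂ) = (p : ℂ) ^ (2 * (m : ℤ) - 3 : ℤ) - (p : ℂ) ^ ((m : ℤ) - 3 : ℤ) * ((p : ℂ) - 1) - (p : ℂ) ^ ((m : ℤ) - 3 : ℤ) * GaussQ p F + (p : ℂ) ^ (-3 : ℤ) * ((p : ℂ) - 1) * (GaussQ p F) ^ 2 + (p : ℂ) ^ (-2 : ℤ) * etaBar p (-(c₁ * c₂)) * ((p : ℂ) ^ m - GaussQ p F) * GaussQ p F) ∧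
    (c₃ = 0 ∧ ((c₁ = 0 ∧ c₂ ≠ 0) ∨ (c₁ ≠ 0 ∧ c₂ = 0)) →
      (((univ.filter (fun ab : F × F =>
      Trq p F (ab.1 ^ 2) = c₁ ∧ Trq p F (ab.2 ^ 2) = c₂ ∧
        Trq p F (ab.1 * ab.2) = c₃)).card : ℕ) : ℂ) = (p : ℂ) ^ (2 * (m : ℤ) - 3 : ℤ) + (p : ℂ) ^ ((m : ℤ) - 3 : ℤ) * ((p : ℂ) - 1) ^ 2 - (p : ℂ) ^ ((m : ℤ) - 3 : ℤ) * GaussQ p F - (p : ℂ) ^ (-3 : ℤ) * ((p : ℂ) - 1) ^ 2 * (GaussQ p F) ^ 2) ∧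
    (c₃ ≠ 0 ∧ ((c₁ = 0 ∧ c₂ ≠ 0) ∨ (c₁ ≠ 0 ∧ c₂ = 0)) →
      (((univ.filter (fun ab : F × F =>
      Trq p F (ab.1 ^ 2) = c₁ ∧ Trq p F (ab.2 ^ 2) = c₂ ∧
        Trq p F (ab.1 * ab.2) = c₃)).card : ℕ) : ℂ) = (p : ℂ) ^ (2 * (m : ℤ) - 3 : ℤ) + (p : ℂ) ^ ((m : ℤ) - 3 : ℤ) * ((p : ℂ) - 1) * (GaussQ p F - 1) - (p : ℂ) ^ (-3 : ℤ) * (GaussQ p F) ^ 2) ∧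
    ((c₁ ≠ 0 ∧ c₂ ≠ 0 ∧ c₃ ≠ 0) ∧ c₃ ^ 2 - c₁ * c₂ = 0 →
      (((univ.filter (fun ab : F × F =>
      Trq p F (ab.1 ^ 2) = c₁ ∧ Trq p F (ab.2 ^ 2) = c₂ ∧
        Trq p F (ab.1 * ab.2) = c₃)).card : ℕ) : ℂ) = (p : ℂ) ^ (2 * (m : ℤ) - 3 : ℤ) - (p : ℂ) ^ ((m : ℤ) - 3 : ℤ) * (GaussQ p F - 1) - (p : ℂ) ^ (-3 : ℤ) * (GaussQ p F) ^ 2) ∧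
    ((c₁ ≠ 0 ∧ c₂ ≠ 0 ∧ c₃ ≠ 0) ∧ etaBar p (c₃ ^ 2 - c₁ * c₂) = 1 →
      (((univ.filter (fun ab : F × F =>
      Trq p F (ab.1 ^ 2) = c₁ ∧ Trq p F (ab.2 ^ 2) = c₂ ∧
        Trq p F (ab.1 * ab.2) = c₃)).card : ℕ) : ℂ) = (p : ℂ) ^ (2 * (m : ℤ) - 3 : ℤ) - (p : ℂ) ^ ((m : ℤ) - 3 : ℤ) * (2 * GaussQ p F - 1) + (p : ℂ) ^ (-3 : ℤ) * ((p : ℂ) + 1) * ((p : ℂ) ^ m - GaussQ p F) * GaussQ p F) ∧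
    ((c₁ ≠ 0 ∧ c₂ ≠ 0 ∧ c₃ ≠ 0) ∧ etaBar p (c₃ ^ 2 - c₁ * c₂) = -1 →
      (((univ.filter (fun ab : F × F =>
      Trq p F (ab.1 ^ 2) = c₁ ∧ Trq p F (ab.2 ^ 2) = c₂ ∧
        Trq p F (ab.1 * ab.2) = c₃)).card : ℕ) : ℂ) = (p : ℂ) ^ (2 * (m : ℤ) - 3 : ℤ) - (p : ℂ) ^ ((m : ℤ) - 3 : ℤ) * (2 * GaussQ p F - 1) - (p : ℂ) ^ (-3 : ℤ) * ((p : ℂ) - 1) * ((p : ℂ) ^ m - GaussQ p F) * GaussQ p F) := by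
  have hN := N_formula p m hp F hq hmeven c₁ c₂ c₃
  have hG := GaussQ_sq p m F hp hq hmeven
  have hp0 : (p : ℂ) ≠ 0 := by exact_mod_cast (Fact.out : Nat.Prime p).ne_zero
  have z1 : (p : ℂ) ^ (2 * (m : ℤ) - 3 : ℤ) = (p : ℂ) ^ m * (p : ℂ) ^ m / (p : ℂ) ^ 3 := by
    rw [zpow_sub₀ hp0, two_mul, zpow_add₀ hp0]; norm_cast
  have z2 : (p : ℂ) ^ ((m : ℤ) - 3 : ℤ) = (p : ℂ) ^ m / (p : ℂ) ^ 3 := by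
    rw [zpow_sub₀ hp0]; norm_cast
  have z3 : (p : ℂ) ^ (-3 : ℤ) = 1 / (p : ℂ) ^ 3 := by
    rw [zpow_neg, one_div]; norm_cast
  have z4 : (p : ℂ) ^ (-2 : ℤ) = 1 / (p : ℂ) ^ 2 := by
    rw [zpow_neg, one_div]; norm_cast
  rw [z1, z2, z3, z4]
  rw [← hG] at hN ⊢
  generalize (((univ.filter (fun ab : F × F =>
      Trq p F (ab.1 ^ 2) = c₁ ∧ Trq p F (ab.2 ^ 2) = c₂ ∧
        Trq p F (ab.1 * ab.2) = c₃)).card : ℕ) : ℂ) = N at hN ⊢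
  generalize GaussQ p F = G at hN ⊢
  have hp3 : (p : ℂ) ^ 3 ≠ 0 := pow_ne_zero 3 hp0
  have esq : ∀ c : ZMod p, c ≠ 0 → etaBar p (c ^ 2) = 1 := by
    intro c hc
    simp [etaBar, hc, IsSquare.sq c]
  have e0 : etaBar p 0 = 0 := by simp [etaBar]
  refine ⟨?_, ?_, ?_, ?_, ?_, ?_, ?_, ?_⟩
  · rintro ⟨h1, h2, h3⟩
    rw [if_pos ⟨h1, h2, h3⟩, if_pos ⟨h1, h2, h3⟩] at hN
    apply mul_left_cancel₀ hp3
    rw [hN]; field_simp; ring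
  · rintro ⟨h1, h2, h3⟩
    have hn : ¬ (c₁ = 0 ∧ c₂ = 0 ∧ c₃ = 0) := by tauto
    have hD : c₃ ^ 2 - c₁ * c₂ = c₃ ^ 2 := by rw [h1]; ring
    rw [if_neg hn, if_neg hn, hD, esq _ h3] at hN
    apply mul_left_cancel₀ hp3
    rw [hN]; field_simp; ring
  · rintro ⟨h1, h2, h3⟩
    have hn : ¬ (c₁ = 0 ∧ c₂ = 0 ∧ c₃ = 0) := by tauto
    have hD : c₃ ^ 2 - c₁ * c₂ = -(c₁ * c₂) := by rw [h3]; ring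
    rw [if_neg hn, if_neg hn, hD] at hN
    apply mul_left_cancel₀ hp3
    rw [hN]; field_simp; ring
  · rintro ⟨h3, h12⟩
    have hn : ¬ (c₁ = 0 ∧ c₂ = 0 ∧ c₃ = 0) := by tauto
    have hD : c₃ ^ 2 - c₁ * c₂ = 0 := by
      rcases h12 with h | h
      · rw [h3, h.1]; ring
      · rw [h3, h.2]; ring
    rw [if_neg hn, if_neg hn, hD, e0] at hN
    apply mul_left_cancel₀ hp3
    rw [hN]; field_simp; ring
  · rintro ⟨h3, h12⟩
    have hn : ¬ (c₁ = 0 ∧ c₂ = 0 ∧ c₃ = 0) := by tauto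
    have hD : c₃ ^ 2 - c₁ * c₂ = c₃ ^ 2 := by
      rcases h12 with h | h
      · rw [h.1]; ring
      · rw [h.2]; ring
    rw [if_neg hn, if_neg hn, hD, esq _ h3] at hN
    apply mul_left_cancel₀ hp3
    rw [hN]; field_simp; ring
  · rintro ⟨h, hD⟩
    have hn : ¬ (c₁ = 0 ∧ c₂ = 0 ∧ c₃ = 0) := by tauto
    rw [if_neg hn, if_neg hn, hD, e0] at hN
    apply mul_left_cancel₀ hp3
    rw [hN]; field_simp; ring
  · rintro ⟨h, hD⟩
    have hn : ¬ (c₁ = 0 ∧ c₂ = 0 ∧ c₃ = 0) := by tauto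
    rw [if_neg hn, if_neg hn, hD] at hN
    apply mul_left_cancel₀ hp3
    rw [hN]; field_simp; ring
  · rintro ⟨h, hD⟩
    have hn : ¬ (c₁ = 0 ∧ c₂ = 0 ∧ c₃ = 0) := by tauto
    rw [if_neg hn, if_neg hn, hD] at hN
    apply mul_left_cancel₀ hp3
    rw [hN]; field_simp; ring
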